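/- There exists a constant C such that for every measurable function f : ℍ → [0,∞], ‖M₂f‖_{L^{2,∞}(μ)} ≤ C · ‖f‖_{L^{2,1}(μ)}; that is, the noncentered maximal operator M₂ is bounded from L^{2,1}(ℍ) to L^{2,∞}(ℍ) on the hyperbolic plane. -/

import Mathlib

open MeasureTheory ENNReal NNReal UpperHalfPlane

noncomputable section

instance : MeasurableSpace UpperHalfPlane := borel UpperHalfPlane

instance : BorelSpace UpperHalfPlane := ⟨rfl⟩

/-- The hyperbolic measure on the upper half-plane: the measure with density
`(Im z)⁻²` with respect to two-dimensional Lebesgue measure. -/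
def hypMeasure : Measure UpperHalfPlane :=
  (Measure.comap (fun z : UpperHalfPlane => (z : ℂ)) volume).withDensity
    fun z => ENNReal.ofReal (1 / z.im ^ 2)

/-- The noncentered maximal function: the supremum of the averages of `f` over all
metric balls (for the hyperbolic distance) containing the point `z`. -/
def M2 (f : UpperHalfPlane → ℝ≥0∞) (z : UpperHalfPlane) : ℝ≥0∞ :=
  ⨆ (c : UpperHalfPlane) (r : ℝ) (_ : 0 < r) (_ : z ∈ Metric.ball c r),
    (hypMeasure (Metric.ball c r))⁻¹ * ∫⁻ w in Metric.ball c r, f w ∂hypMeasure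

/-- The Lorentz quasi-norm `‖f‖_{L^{2,1}(μ)} = 2 ∫₀^∞ μ({x : f x > t})^{1/2} dt`. -/
def lorentz21 {α : Type*} [MeasurableSpace α] (μ : Measure α) (f : α → ℝ≥0∞) : ℝ≥0∞ :=
  2 * ∫⁻ t in Set.Ioi (0 : ℝ), (μ {x | ENNReal.ofReal t < f x}) ^ (1 / 2 : ℝ)

/-- The Lorentz quasi-norm `‖f‖_{L^{2,∞}(μ)} = sup_{t>0} t · μ({x : f x > t})^{1/2}`. -/
def lorentz2inf {α : Type*} [MeasurableSpace α] (μ : Measure α) (f : α → ℝ≥0∞) : ℝ≥0∞ :=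
  ⨆ (t : ℝ) (_ : 0 < t), ENNReal.ofReal t * (μ {x | ENNReal.ofReal t < f x}) ^ (1 / 2 : ℝ)

/-!
Averages over balls of radius at most one obey a weak `(1, 1)` bound by the Vitali covering lemma,
hence, by Cauchy–Schwarz, a bound from `L²` to `L^{2,∞}`.

A ball `B` of radius `r ≥ 1` has measure at least a constant times `e^r`, and if it contains `z`,
then `|x - Re z| ≤ e^r √(Im z) √y` for every `x + iy` in `B`. Integrating over `B` one horizontal
line at a time therefore bounds the average of `f` over `B` by a constant times `√(Im z) F(Re z)`,
where `F(x) = ∫ √y (M f(·, y))(x) dy / y²` and `M` is the maximal operator of the real line. Two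
facts about the weight `√y ∈ L^{2,∞}(dy / y²)` finish the argument:

* the product `√y F(x)` is in `L^{2,∞}` as soon as `F ∈ L²(dx)`;
* `L^{2,∞}`–`L^{2,1}` duality gives `‖F‖₂ ≲ ‖M f‖_{2,1} ≲ μ(E)^{1/2}` when `f` is the indicator of
  `E`, because `M f ≤ 1` and `M` is of weak type `(1, 1)`. The layer-cake formula and Minkowski's
  inequality then give `‖F‖₂ ≲ ‖f‖_{2,1}` for all `f`.
-/

section Lorentz

lemma rpow_half_sq (a : ℝ≥0∞) : (a ^ (1 / 2 : ℝ)) ^ 2 = a := by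
  rw [← ENNReal.rpow_natCast, ← ENNReal.rpow_mul]
  norm_num

lemma lintegral_indicator_ofReal_lt {α : Type*} (f : α → ℝ≥0∞) (x : α) :
    ∫⁻ s in Set.Ioi (0 : ℝ), {y | ENNReal.ofReal s < f y}.indicator 1 x = f x := by
  change ∫⁻ s in Set.Ioi (0 : ℝ), {s | ENNReal.ofReal s < f x}.indicator 1 s = f x
  have h_meas : MeasurableSet {s : ℝ | ENNReal.ofReal s < f x} :=
    measurableSet_lt ENNReal.measurable_ofReal measurable_const
  rw [lintegral_indicator_one h_meas, Measure.restrict_apply h_meas]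
  rcases eq_or_ne (f x) ⊤ with h_top | h_top
  · simp [h_top]
  · have h_Ioo : {s : ℝ | ENNReal.ofReal s < f x} ∩ Set.Ioi 0 = Set.Ioo 0 (f x).toReal := by
      ext s
      simp only [Set.mem_inter_iff, Set.mem_ofPred_eq, Set.mem_Ioi, Set.mem_Ioo,
        and_comm (b := 0 < s)]
      exact and_congr_right fun hs ↦ ENNReal.ofReal_lt_iff_lt_toReal hs.le h_top
    rw [h_Ioo, Real.volume_Ioo, sub_zero, ENNReal.ofReal_toReal h_top]

variable {X Y : Type*} [MeasurableSpace X] [MeasurableSpace Y] {μ : Measure X} {ν : Measure Y}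

lemma eLpNorm_two_sq (f : X → ℝ≥0∞) : eLpNorm f 2 μ ^ 2 = ∫⁻ x, f x ^ 2 ∂μ := by
  simpa using eLpNorm_nnreal_pow_eq_lintegral (f := f) (μ := μ) (p := 2) two_ne_zero

lemma eLpNorm_two_const_mul (a : ℝ≥0∞) {f : X → ℝ≥0∞} (hf : Measurable f) :
    eLpNorm (fun x ↦ a * f x) 2 μ = a * eLpNorm f 2 μ := by
  refine (ENNReal.pow_right_strictMono two_ne_zero).injective ?_
  simp only [eLpNorm_two_sq, mul_pow, lintegral_const_mul _ (hf.pow_const 2)]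

lemma lintegral_mul_le_eLpNorm_two {f g : X → ℝ≥0∞} (hf : Measurable f) (hg : Measurable g) :
    ∫⁻ x, f x * g x ∂μ ≤ eLpNorm f 2 μ * eLpNorm g 2 μ := by
  simpa [eLpNorm_eq_lintegral_rpow_enorm_toReal two_ne_zero ofNat_ne_top] using
    ENNReal.lintegral_mul_le_Lp_mul_Lq μ Real.HolderConjugate.two_two hf.aemeasurable
      hg.aemeasurable

lemma eLpNorm_two_lintegral_le [SFinite μ] [SFinite ν] {F : Y → X → ℝ≥0∞}
    (hF : Measurable (Function.uncurry F)) :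
    eLpNorm (fun x ↦ ∫⁻ y, F y x ∂ν) 2 μ ≤ ∫⁻ y, eLpNorm (F y) 2 μ ∂ν := by
  have hF_left (y : Y) : Measurable (F y) := hF.comp measurable_prodMk_left
  have hF_right (x : X) : Measurable fun y ↦ F y x := hF.comp measurable_prodMk_right
  have h_prod : Measurable fun p : (X × Y) × Y ↦ F p.1.2 p.1.1 * F p.2 p.1.1 := by fun_prop
  rw [← ENNReal.pow_le_pow_left_iff two_ne_zero, eLpNorm_two_sq]
  calc ∫⁻ x, (∫⁻ y, F y x ∂ν) ^ 2 ∂μ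
    _ = ∫⁻ x, ∫⁻ y, ∫⁻ y', F y x * F y' x ∂ν ∂ν ∂μ := by
        simp_rw [pow_two, lintegral_const_mul _ (hF_right _), lintegral_mul_const _ (hF_right _)]
    _ = ∫⁻ y, ∫⁻ y', ∫⁻ x, F y x * F y' x ∂μ ∂ν ∂ν := by
        rw [lintegral_lintegral_swap h_prod.lintegral_prod_right'.aemeasurable]
        refine lintegral_congr fun y ↦ lintegral_lintegral_swap (Measurable.aemeasurable ?_)
        fun_prop
    _ ≤ ∫⁻ y, ∫⁻ y', eLpNorm (F y) 2 μ * eLpNorm (F y') 2 μ ∂ν ∂ν := by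
        gcongr with y y'
        exact lintegral_mul_le_eLpNorm_two (hF_left y) (hF_left y')
    _ = (∫⁻ y, eLpNorm (F y) 2 μ ∂ν) ^ 2 := by
        have h_norm : Measurable fun y ↦ eLpNorm (F y) 2 μ := by
          simp only [eLpNorm_eq_lintegral_rpow_enorm_toReal two_ne_zero ofNat_ne_top]
          exact (Measurable.lintegral_prod_right' (f := fun p : Y × X ↦ ‖F p.1 p.2‖ₑ ^ _)
            (by fun_prop)).pow_const _
        simp_rw [pow_two, lintegral_const_mul _ h_norm, lintegral_mul_const _ h_norm]

lemma measurable_indicator_ofReal_lt {f : X → ℝ≥0∞} (hf : Measurable f) :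
    Measurable fun p : ℝ × X ↦ {x | ENNReal.ofReal p.1 < f x}.indicator (1 : X → ℝ≥0∞) p.2 :=
  measurable_one.indicator (s := {p : ℝ × X | ENNReal.ofReal p.1 < f p.2})
    (measurableSet_lt (by fun_prop) (by fun_prop))

lemma measurableSet_ofReal_lt {f : X → ℝ≥0∞} (hf : Measurable f) (t : ℝ) :
    MeasurableSet {x | ENNReal.ofReal t < f x} :=
  measurableSet_lt measurable_const hf

lemma antitone_measure_ofReal_lt (f : X → ℝ≥0∞) :
    Antitone fun s : ℝ ↦ μ {x | ENNReal.ofReal s < f x} :=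
  fun _ _ hs ↦ measure_mono fun _ hx ↦ (ENNReal.ofReal_le_ofReal hs).trans_lt hx

lemma lintegral_eq_lintegral_measure_ofReal_lt [SFinite μ] {f : X → ℝ≥0∞} (hf : Measurable f) :
    ∫⁻ x, f x ∂μ = ∫⁻ s in Set.Ioi (0 : ℝ), μ {x | ENNReal.ofReal s < f x} := by
  calc ∫⁻ x, f x ∂μ
    _ = ∫⁻ x, (∫⁻ s in Set.Ioi (0 : ℝ), {y | ENNReal.ofReal s < f y}.indicator 1 x) ∂μ := by
        simp_rw [lintegral_indicator_ofReal_lt]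
    _ = ∫⁻ s in Set.Ioi (0 : ℝ), ∫⁻ x, {y | ENNReal.ofReal s < f y}.indicator 1 x ∂μ :=
        (lintegral_lintegral_swap (measurable_indicator_ofReal_lt hf).aemeasurable).symm
    _ = ∫⁻ s in Set.Ioi (0 : ℝ), μ {x | ENNReal.ofReal s < f x} := by
        simp_rw [lintegral_indicator_one (measurableSet_ofReal_lt hf _)]

lemma eLpNorm_two_indicator_one {E : Set X} (hE : MeasurableSet E) :
    eLpNorm (E.indicator (1 : X → ℝ≥0∞)) 2 μ = μ E ^ (1 / 2 : ℝ) := by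
  simpa [Pi.one_def] using
    eLpNorm_indicator_const (c := (1 : ℝ≥0∞)) (μ := μ) hE two_ne_zero ofNat_ne_top

lemma two_mul_eLpNorm_two_le_lorentz21 [SFinite μ] {f : X → ℝ≥0∞} (hf : Measurable f) :
    2 * eLpNorm f 2 μ ≤ lorentz21 μ f := by
  rw [lorentz21]
  gcongr
  calc eLpNorm f 2 μ
    _ = eLpNorm (fun x ↦ ∫⁻ s in Set.Ioi (0 : ℝ), {y | ENNReal.ofReal s < f y}.indicator 1 x)
          2 μ := by simp_rw [lintegral_indicator_ofReal_lt]
    _ ≤ ∫⁻ s in Set.Ioi (0 : ℝ), eLpNorm ({y | ENNReal.ofReal s < f y}.indicator 1) 2 μ :=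
        eLpNorm_two_lintegral_le (measurable_indicator_ofReal_lt hf)
    _ = ∫⁻ s in Set.Ioi (0 : ℝ), μ {x | ENNReal.ofReal s < f x} ^ (1 / 2 : ℝ) := by
        simp_rw [eLpNorm_two_indicator_one (measurableSet_ofReal_lt hf _)]

lemma measurable_measure_ofReal_lt [SFinite ν] {h : X × Y → ℝ≥0∞} (hh : Measurable h) :
    Measurable fun p : X × ℝ ↦ ν {y | ENNReal.ofReal p.2 < h (p.1, y)} :=
  measurable_measure_prodMk_left (s := {q : (X × ℝ) × Y | ENNReal.ofReal q.1.2 < h (q.1.1, q.2)})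
    (measurableSet_lt (by fun_prop) (by fun_prop))

lemma measurable_lorentz21 [SFinite ν] {h : X × Y → ℝ≥0∞} (hh : Measurable h) :
    Measurable fun x ↦ lorentz21 ν fun y ↦ h (x, y) :=
  ((measurable_measure_ofReal_lt hh).pow_const _).lintegral_prod_right'.const_mul 2

lemma eLpNorm_two_lorentz21_le [SFinite μ] [SFinite ν] {h : X × Y → ℝ≥0∞} (hh : Measurable h) :
    eLpNorm (fun x ↦ lorentz21 ν fun y ↦ h (x, y)) 2 μ ≤ lorentz21 (μ.prod ν) h := by
  have h_dist : Measurable fun p : ℝ × X ↦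
      2 * ν {y | ENNReal.ofReal p.1 < h (p.2, y)} ^ (1 / 2 : ℝ) :=
    (((measurable_measure_ofReal_lt hh).comp measurable_swap).pow_const _).const_mul _
  have h_norm (s : ℝ) :
      eLpNorm (fun x ↦ 2 * ν {y | ENNReal.ofReal s < h (x, y)} ^ (1 / 2 : ℝ)) 2 μ =
        2 * μ.prod ν {p | ENNReal.ofReal s < h p} ^ (1 / 2 : ℝ) := by
    have h_meas := measurableSet_ofReal_lt hh s
    refine (ENNReal.pow_right_strictMono two_ne_zero).injective ?_
    simp only [eLpNorm_two_sq, mul_pow, rpow_half_sq]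
    rw [Measure.prod_apply h_meas, lintegral_const_mul' _ _ (by finiteness)]
    rfl
  calc eLpNorm (fun x ↦ lorentz21 ν fun y ↦ h (x, y)) 2 μ
    _ = eLpNorm (fun x ↦ ∫⁻ s in Set.Ioi (0 : ℝ),
          2 * ν {y | ENNReal.ofReal s < h (x, y)} ^ (1 / 2 : ℝ)) 2 μ := by
        simp_rw [lorentz21, lintegral_const_mul' _ _ ofNat_ne_top]
    _ ≤ ∫⁻ s in Set.Ioi (0 : ℝ),
          eLpNorm (fun x ↦ 2 * ν {y | ENNReal.ofReal s < h (x, y)} ^ (1 / 2 : ℝ)) 2 μ :=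
        eLpNorm_two_lintegral_le h_dist
    _ = lorentz21 (μ.prod ν) h := by
        simp_rw [h_norm, lintegral_const_mul' _ _ ofNat_ne_top, lorentz21]

lemma lorentz2inf_le_iff {f : X → ℝ≥0∞} {N : ℝ≥0∞} :
    lorentz2inf μ f ≤ N ↔
      ∀ t : ℝ, 0 < t → ENNReal.ofReal t ^ 2 * μ {x | ENNReal.ofReal t < f x} ≤ N ^ 2 := by
  simp only [lorentz2inf, iSup_le_iff]
  refine forall₂_congr fun t _ ↦ ?_
  rw [← ENNReal.pow_le_pow_left_iff two_ne_zero, mul_pow, rpow_half_sq]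

lemma lorentz2inf_mono {f g : X → ℝ≥0∞} (hfg : f ≤ g) : lorentz2inf μ f ≤ lorentz2inf μ g := by
  unfold lorentz2inf
  gcongr with t _ x
  exact hfg x

lemma lorentz2inf_sup_le (f g : X → ℝ≥0∞) :
    lorentz2inf μ (f ⊔ g) ≤ lorentz2inf μ f + lorentz2inf μ g := by
  refine iSup₂_le fun t ht ↦ ?_
  have h_level : {x | ENNReal.ofReal t < (f ⊔ g) x} =
      {x | ENNReal.ofReal t < f x} ∪ {x | ENNReal.ofReal t < g x} := by
    ext x
    simp [lt_sup_iff]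
  calc ENNReal.ofReal t * μ {x | ENNReal.ofReal t < (f ⊔ g) x} ^ (1 / 2 : ℝ)
    _ ≤ ENNReal.ofReal t *
          (μ {x | ENNReal.ofReal t < f x} + μ {x | ENNReal.ofReal t < g x}) ^ (1 / 2 : ℝ) := by
        rw [h_level]
        gcongr
        exact measure_union_le _ _
    _ ≤ ENNReal.ofReal t * μ {x | ENNReal.ofReal t < f x} ^ (1 / 2 : ℝ) +
          ENNReal.ofReal t * μ {x | ENNReal.ofReal t < g x} ^ (1 / 2 : ℝ) := by
        rw [← mul_add]
        gcongr
        exact ENNReal.rpow_add_le_add_rpow _ _ (by norm_num) (by norm_num)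
    _ ≤ lorentz2inf μ f + lorentz2inf μ g :=
        add_le_add (le_iSup₂ (f := fun t (_ : 0 < t) ↦
          ENNReal.ofReal t * μ {x | ENNReal.ofReal t < f x} ^ (1 / 2 : ℝ)) t ht)
          (le_iSup₂ (f := fun t (_ : 0 < t) ↦
          ENNReal.ofReal t * μ {x | ENNReal.ofReal t < g x} ^ (1 / 2 : ℝ)) t ht)

lemma sq_mul_measure_le_lorentz2inf_sq (f : X → ℝ≥0∞) {t : ℝ} (ht : 0 < t) :
    ENNReal.ofReal t ^ 2 * μ {x | ENNReal.ofReal t < f x} ≤ lorentz2inf μ f ^ 2 :=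
  lorentz2inf_le_iff.1 le_rfl t ht

lemma ae_eq_zero_of_lorentz2inf_eq_zero {f : X → ℝ≥0∞} (hf : lorentz2inf μ f = 0) :
    f =ᵐ[μ] 0 := by
  have h_level (n : ℕ) : ∀ᵐ x ∂μ, f x ≤ ENNReal.ofReal (1 / (n + 1)) := by
    have h_pos : (0 : ℝ) < 1 / (n + 1) := Nat.one_div_pos_of_nat
    have h_sq := sq_mul_measure_le_lorentz2inf_sq (μ := μ) f h_pos
    rw [hf, zero_pow two_ne_zero, nonpos_iff_eq_zero, mul_eq_zero] at h_sq
    simpa [ae_iff] using h_sq.resolve_left (pow_ne_zero _ (ENNReal.ofReal_pos.2 h_pos).ne')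
  filter_upwards [ae_all_iff.2 h_level] with x hx
  have h_lim := ENNReal.tendsto_ofReal (tendsto_one_div_add_atTop_nhds_zero_nat (𝕜 := ℝ))
  simpa using ge_of_tendsto' h_lim hx

lemma lorentz2inf_const_mul_le (a : ℝ≥0∞) (f : X → ℝ≥0∞) :
    lorentz2inf μ (fun x ↦ a * f x) ≤ a * lorentz2inf μ f := by
  refine lorentz2inf_le_iff.2 fun t ht ↦ ?_
  rcases eq_or_ne a 0 with rfl | ha_zero
  · simp
  rcases eq_or_ne a ⊤ with rfl | ha_top
  · rcases eq_or_ne (lorentz2inf μ f) 0 with hf_zero | hf_zero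
    · have h_null : μ {x | ENNReal.ofReal t < ⊤ * f x} = 0 := by
        rw [measure_eq_zero_iff_ae_notMem]
        filter_upwards [ae_eq_zero_of_lorentz2inf_eq_zero hf_zero] with x hx
        simp [hx]
      simp [h_null]
    · simp [ENNReal.top_mul hf_zero]
  have ha_pos : 0 < a.toReal := ENNReal.toReal_pos ha_zero ha_top
  have h_scale : ENNReal.ofReal t = a * ENNReal.ofReal (t / a.toReal) := by
    rw [ENNReal.ofReal_div_of_pos ha_pos, ENNReal.ofReal_toReal ha_top,
      ENNReal.mul_div_cancel ha_zero ha_top]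
  calc ENNReal.ofReal t ^ 2 * μ {x | ENNReal.ofReal t < a * f x}
    _ = a ^ 2 * (ENNReal.ofReal (t / a.toReal) ^ 2 *
          μ {x | ENNReal.ofReal (t / a.toReal) < f x}) := by
        simp_rw [h_scale, ENNReal.mul_lt_mul_iff_right ha_zero ha_top, mul_pow, mul_assoc]
    _ ≤ (a * lorentz2inf μ f) ^ 2 := by
        rw [mul_pow]
        gcongr
        exact sq_mul_measure_le_lorentz2inf_sq f (div_pos ht ha_pos)

lemma lorentz2inf_mul_prod_le [SFinite ν] {F : X → ℝ≥0∞} {w : Y → ℝ≥0∞} (hF : Measurable F)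
    (hw : Measurable w) :
    lorentz2inf (μ.prod ν) (fun p ↦ F p.1 * w p.2) ≤ eLpNorm F 2 μ * lorentz2inf ν w := by
  refine lorentz2inf_le_iff.2 fun t ht ↦ ?_
  have h_meas : MeasurableSet {p : X × Y | ENNReal.ofReal t < F p.1 * w p.2} :=
    measurableSet_ofReal_lt (by fun_prop) t
  calc ENNReal.ofReal t ^ 2 * μ.prod ν {p | ENNReal.ofReal t < F p.1 * w p.2}
    _ = ∫⁻ x, ENNReal.ofReal t ^ 2 * ν {y | ENNReal.ofReal t < F x * w y} ∂μ := by
        rw [Measure.prod_apply h_meas, ← lintegral_const_mul' _ _ (by finiteness)]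
        rfl
    _ ≤ ∫⁻ x, F x ^ 2 * lorentz2inf ν w ^ 2 ∂μ := by
        refine lintegral_mono fun x ↦ ?_
        rw [← mul_pow]
        exact lorentz2inf_le_iff.1 (lorentz2inf_const_mul_le _ _) t ht
    _ = (eLpNorm F 2 μ * lorentz2inf ν w) ^ 2 := by
        rw [lintegral_mul_const _ (hF.pow_const 2), mul_pow, eLpNorm_two_sq]

lemma lintegral_Ioi_one_div_sq {a : ℝ} (ha : 0 < a) :
    ∫⁻ y in Set.Ioi a, ENNReal.ofReal (1 / y ^ 2) = ENNReal.ofReal (1 / a) := by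
  have h_rpow : Set.EqOn (fun y : ℝ ↦ y ^ (-2 : ℝ)) (fun y ↦ 1 / y ^ 2) (Set.Ioi a) := by
    intro y hy
    simp [Real.rpow_neg (ha.trans hy).le]
  have h_int : IntegrableOn (fun y : ℝ ↦ 1 / y ^ 2) (Set.Ioi a) :=
    (integrableOn_Ioi_rpow_of_lt (by norm_num) ha).congr_fun h_rpow measurableSet_Ioi
  rw [← ofReal_integral_eq_lintegral_ofReal h_int (ae_of_all _ fun y ↦ by positivity),
    ← setIntegral_congr_fun measurableSet_Ioi h_rpow, integral_Ioi_rpow_of_lt (by norm_num) ha]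
  norm_num [Real.rpow_neg_one]

lemma setLIntegral_le_add_lorentz2inf_sq [SFinite μ] {w : X → ℝ≥0∞} (hw : Measurable w)
    (A : Set X) {τ : ℝ} (hτ : 0 < τ) :
    ∫⁻ x in A, w x ∂μ ≤ ENNReal.ofReal τ * μ A + lorentz2inf μ w ^ 2 / ENNReal.ofReal τ := by
  have h_weak {s : ℝ} (hs : 0 < s) :
      μ {x | ENNReal.ofReal s < w x} ≤ lorentz2inf μ w ^ 2 * ENNReal.ofReal (1 / s ^ 2) := by
    rw [one_div, ENNReal.ofReal_inv_of_pos (by positivity), ENNReal.ofReal_pow hs.le,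
      ← div_eq_mul_inv, ENNReal.le_div_iff_mul_le (by simp [hs]) (by simp), mul_comm]
    exact sq_mul_measure_le_lorentz2inf_sq w hs
  calc ∫⁻ x in A, w x ∂μ
    _ = ∫⁻ s in Set.Ioc 0 τ ∪ Set.Ioi τ, μ.restrict A {x | ENNReal.ofReal s < w x} := by
        rw [Set.Ioc_union_Ioi_eq_Ioi hτ.le, lintegral_eq_lintegral_measure_ofReal_lt hw]
    _ ≤ (∫⁻ s in Set.Ioc 0 τ, μ.restrict A {x | ENNReal.ofReal s < w x}) +
          ∫⁻ s in Set.Ioi τ, μ.restrict A {x | ENNReal.ofReal s < w x} :=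
        lintegral_union_le _ _ _
    _ ≤ (∫⁻ _ in Set.Ioc 0 τ, μ A) +
          ∫⁻ s in Set.Ioi τ, lorentz2inf μ w ^ 2 * ENNReal.ofReal (1 / s ^ 2) := by
        refine add_le_add (lintegral_mono fun _ ↦ ?_)
          (setLIntegral_mono' measurableSet_Ioi fun s hs ↦ ?_)
        · exact (measure_mono (Set.subset_univ _)).trans_eq (Measure.restrict_apply_univ A)
        · exact (Measure.restrict_apply_le _ _).trans (h_weak (hτ.trans hs))
    _ = ENNReal.ofReal τ * μ A + lorentz2inf μ w ^ 2 / ENNReal.ofReal τ := by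
        rw [setLIntegral_const, Real.volume_Ioc, sub_zero, mul_comm,
          lintegral_const_mul _ (by fun_prop), lintegral_Ioi_one_div_sq hτ, one_div,
          ENNReal.ofReal_inv_of_pos hτ, div_eq_mul_inv]

lemma setLIntegral_le_two_mul_lorentz2inf [SFinite μ] {w : X → ℝ≥0∞} (hw : Measurable w)
    (A : Set X) :
    ∫⁻ x in A, w x ∂μ ≤ 2 * lorentz2inf μ w * μ A ^ (1 / 2 : ℝ) := by
  rcases eq_or_ne (μ A) 0 with hA_zero | hA_zero
  · simp [setLIntegral_measure_zero _ _ hA_zero]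
  rcases eq_or_ne (lorentz2inf μ w) 0 with hw_zero | hw_zero
  · rw [lintegral_congr_ae (ae_restrict_of_ae (ae_eq_zero_of_lorentz2inf_eq_zero hw_zero))]
    simp
  rcases eq_or_ne (lorentz2inf μ w) ⊤ with hw_top | hw_top
  · simp [hw_top, ENNReal.top_mul, hA_zero]
  rcases eq_or_ne (μ A) ⊤ with hA_top | hA_top
  · simp [hA_top, hw_zero]
  have h_root_zero : μ A ^ (1 / 2 : ℝ) ≠ 0 := by simp [hA_zero]
  have h_root_top : μ A ^ (1 / 2 : ℝ) ≠ ⊤ := by simp [hA_top]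
  -- The two terms of the previous bound balance at `τ = ‖w‖_{2,∞} / μ(A)^{1/2}`.
  have h_balance_top := ENNReal.div_ne_top hw_top h_root_zero
  have h_balance_pos := ENNReal.toReal_pos (ENNReal.div_ne_zero.2 ⟨hw_zero, h_root_top⟩)
    h_balance_top
  refine (setLIntegral_le_add_lorentz2inf_sq hw A h_balance_pos).trans_eq ?_
  rw [ENNReal.ofReal_toReal h_balance_top, div_eq_mul_inv (_ ^ 2),
    ENNReal.inv_div (.inl h_root_top) (.inl h_root_zero)]
  nth_rewrite 2 [← rpow_half_sq (μ A)]
  rw [pow_two, pow_two, ← mul_assoc, ENNReal.div_mul_cancel h_root_zero h_root_top, mul_assoc,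
    ENNReal.mul_div_cancel hw_zero hw_top, mul_assoc, two_mul]

lemma lintegral_mul_le_lorentz2inf_mul_lorentz21 [SFinite μ] {w h : X → ℝ≥0∞}
    (hw : Measurable w) (hh : Measurable h) :
    ∫⁻ x, w x * h x ∂μ ≤ lorentz2inf μ w * lorentz21 μ h := by
  calc ∫⁻ x, w x * h x ∂μ
    _ = ∫⁻ s in Set.Ioi (0 : ℝ), ∫⁻ x in {x | ENNReal.ofReal s < h x}, w x ∂μ := by
        simp_rw [← Pi.mul_apply w h]
        rw [← lintegral_withDensity_eq_lintegral_mul _ hw hh,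
          lintegral_eq_lintegral_measure_ofReal_lt hh]
        simp_rw [withDensity_apply _ (measurableSet_ofReal_lt hh _)]
    _ ≤ ∫⁻ s in Set.Ioi (0 : ℝ),
          2 * lorentz2inf μ w * μ {x | ENNReal.ofReal s < h x} ^ (1 / 2 : ℝ) :=
        lintegral_mono fun s ↦ setLIntegral_le_two_mul_lorentz2inf hw _
    _ = lorentz2inf μ w * lorentz21 μ h := by
        rw [lintegral_const_mul _ ((antitone_measure_ofReal_lt h).measurable.pow_const _),
          lorentz21]
        ring

lemma lintegral_Ioc_zero_one_rpow_neg_half :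
    ∫⁻ t in Set.Ioc (0 : ℝ) 1, ENNReal.ofReal (t ^ (-(1 / 2) : ℝ)) = 2 := by
  have h_int : IntegrableOn (fun t : ℝ ↦ t ^ (-(1 / 2) : ℝ)) (Set.Ioc 0 1) :=
    (intervalIntegrable_iff_integrableOn_Ioc_of_le zero_le_one).1
      (intervalIntegral.intervalIntegrable_rpow' (by norm_num))
  rw [← ofReal_integral_eq_lintegral_ofReal h_int
      ((ae_restrict_mem measurableSet_Ioc).mono fun t ht ↦ Real.rpow_nonneg ht.1.le _),
    ← intervalIntegral.integral_of_le zero_le_one, integral_rpow (.inl (by norm_num))]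
  norm_num

lemma lorentz21_le_of_le_one {h : X → ℝ≥0∞} {A : ℝ≥0∞} (h_le : ∀ x, h x ≤ 1)
    (h_weak : ∀ t : ℝ, 0 < t → ENNReal.ofReal t * μ {x | ENNReal.ofReal t < h x} ≤ A) :
    lorentz21 μ h ≤ 4 * A ^ (1 / 2 : ℝ) := by
  have h_tail : ∀ t ∈ Set.Ioi (1 : ℝ), μ {x | ENNReal.ofReal t < h x} ^ (1 / 2 : ℝ) = 0 := by
    intro t ht
    have h_empty : {x | ENNReal.ofReal t < h x} = ∅ := by
      ext x
      simpa using (h_le x).trans (ENNReal.one_le_ofReal.2 (Set.mem_Ioi.1 ht).le)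
    simp [h_empty]
  have h_level : ∀ t ∈ Set.Ioc (0 : ℝ) 1, μ {x | ENNReal.ofReal t < h x} ^ (1 / 2 : ℝ) ≤
      A ^ (1 / 2 : ℝ) * ENNReal.ofReal (t ^ (-(1 / 2) : ℝ)) := by
    intro t ht
    rw [← ENNReal.ofReal_rpow_of_pos ht.1, ENNReal.rpow_neg, ← ENNReal.inv_rpow,
      ← ENNReal.mul_rpow_of_nonneg _ _ (by norm_num), ← div_eq_mul_inv]
    gcongr
    rw [ENNReal.le_div_iff_mul_le (by simp [ht.1]) (by simp), mul_comm]
    exact h_weak t ht.1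
  calc lorentz21 μ h
    _ = 2 * ∫⁻ t in Set.Ioc (0 : ℝ) 1, μ {x | ENNReal.ofReal t < h x} ^ (1 / 2 : ℝ) := by
        rw [lorentz21, ← Set.Ioc_union_Ioi_eq_Ioi zero_le_one,
          lintegral_union measurableSet_Ioi (by simp),
          setLIntegral_congr_fun measurableSet_Ioi h_tail, lintegral_zero, add_zero]
    _ ≤ 2 * ∫⁻ t in Set.Ioc (0 : ℝ) 1, A ^ (1 / 2 : ℝ) * ENNReal.ofReal (t ^ (-(1 / 2) : ℝ)) := by
        gcongr 2 * ?_
        exact setLIntegral_mono' measurableSet_Ioc h_level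
    _ = 4 * A ^ (1 / 2 : ℝ) := by
        rw [lintegral_const_mul _ (by fun_prop), lintegral_Ioc_zero_one_rpow_neg_half]
        ring

lemma lorentz21_comp_measurePreserving {φ : X → Y} (hφ : MeasurePreserving φ μ ν)
    {g : Y → ℝ≥0∞} (hg : Measurable g) : lorentz21 μ (g ∘ φ) = lorentz21 ν g := by
  simp_rw [lorentz21, Function.comp_apply,
    ← hφ.measure_preimage (measurableSet_ofReal_lt hg _).nullMeasurableSet]
  rfl

lemma lorentz2inf_comp_measurePreserving {φ : X → Y} (hφ : MeasurePreserving φ μ ν)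
    {g : Y → ℝ≥0∞} (hg : Measurable g) : lorentz2inf μ (g ∘ φ) = lorentz2inf ν g := by
  simp_rw [lorentz2inf, Function.comp_apply,
    ← hφ.measure_preimage (measurableSet_ofReal_lt hg _).nullMeasurableSet]
  rfl

lemma sq_setLAverage_le {f : X → ℝ≥0∞} (hf : Measurable f) (s : Set X) :
    (⨍⁻ x in s, f x ∂μ) ^ 2 ≤ ⨍⁻ x in s, f x ^ 2 ∂μ := by
  have h := lintegral_mul_le_eLpNorm_two (μ := (μ.restrict s Set.univ)⁻¹ • μ.restrict s) hf
    (measurable_const (a := 1))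
  calc (⨍⁻ x in s, f x ∂μ) ^ 2
    _ = (∫⁻ x, f x * 1 ∂(μ.restrict s Set.univ)⁻¹ • μ.restrict s) ^ 2 := by
      simp_rw [mul_one, laverage]
    _ ≤ (∫⁻ x, f x ^ 2 ∂(μ.restrict s Set.univ)⁻¹ • μ.restrict s) * 1 := by
      grw [h, mul_pow, eLpNorm_two_sq, eLpNorm_two_sq]
      gcongr
      simp [ENNReal.inv_mul_le_one]
    _ = ⨍⁻ x in s, f x ^ 2 ∂μ := by rw [mul_one, laverage]

end Lorentz

section Maximal

variable {X Y : Type*} [PseudoMetricSpace X] [MeasurableSpace X] [MeasurableSpace Y]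
  {μ : Measure X} {ν : Measure Y}

/-- The noncentered Hardy–Littlewood maximal function, restricted to balls with radius in `S`. -/
def maximalFunction {X : Type*} [PseudoMetricSpace X] [MeasurableSpace X] (μ : Measure X)
    (S : Set ℝ) (f : X → ℝ≥0∞) (x : X) : ℝ≥0∞ :=
  ⨆ (c : X) (r ∈ S) (_ : x ∈ Metric.ball c r), ⨍⁻ w in Metric.ball c r, f w ∂μ

lemma lt_maximalFunction_iff {S : Set ℝ} {f : X → ℝ≥0∞} {t : ℝ≥0∞} {x : X} :
    t < maximalFunction μ S f x ↔
      ∃ c, ∃ r ∈ S, x ∈ Metric.ball c r ∧ t < ⨍⁻ w in Metric.ball c r, f w ∂μ := by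
  simp only [maximalFunction, lt_iSup_iff, exists_prop]

/-- The centred maximal function over the radii `2 ^ n`, `n : ℤ`. Using only countably many radii
makes it jointly measurable in the point and in any parameter of the function. -/
def dyadicMaximal {X : Type*} [PseudoMetricSpace X] [MeasurableSpace X] (μ : Measure X)
    (g : X → ℝ≥0∞) (x : X) : ℝ≥0∞ :=
  ⨆ n : ℤ, ⨍⁻ w in Metric.ball x (2 ^ n), g w ∂μ

lemma dyadicMaximal_le_maximalFunction (g : X → ℝ≥0∞) :
    dyadicMaximal μ g ≤ maximalFunction μ (Set.Ioi 0) g := by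
  refine fun x ↦ iSup_le fun n ↦ le_iSup₂_of_le x (2 ^ n) ?_
  have h_pos : (0 : ℝ) < 2 ^ n := by positivity
  exact le_iSup₂_of_le h_pos (Metric.mem_ball_self h_pos) le_rfl

lemma dyadicMaximal_le_one {g : X → ℝ≥0∞} (hg : ∀ x, g x ≤ 1) (x : X) :
    dyadicMaximal μ g x ≤ 1 := by
  refine iSup_le fun n ↦ ?_
  rw [setLAverage_eq]
  grw [lintegral_mono hg]
  rw [setLIntegral_one]
  exact ENNReal.div_self_le_one

lemma dyadicMaximal_lintegral_le [SFinite μ] [SFinite ν] {G : Y → X → ℝ≥0∞}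
    (hG : Measurable (Function.uncurry G)) (x : X) :
    dyadicMaximal μ (fun x' ↦ ∫⁻ s, G s x' ∂ν) x ≤ ∫⁻ s, dyadicMaximal μ (G s) x ∂ν := by
  refine iSup_le fun n ↦ ?_
  rw [laverage, lintegral_lintegral_swap (by fun_prop)]
  exact lintegral_mono fun s ↦ le_iSup (fun n : ℤ ↦ ⨍⁻ w in Metric.ball x (2 ^ n), G s w ∂μ) n

/-- The dyadic maximal function in the first variable, the second one being frozen. -/
def fiberMaximal {X Y : Type*} [PseudoMetricSpace X] [MeasurableSpace X] (μ : Measure X)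
    (f : X × Y → ℝ≥0∞) (p : X × Y) : ℝ≥0∞ :=
  dyadicMaximal μ (fun x ↦ f (x, p.2)) p.1

lemma fiberMaximal_le_lintegral [SFinite μ] {f : X × Y → ℝ≥0∞} (hf : Measurable f) (x : X) (y : Y) :
    fiberMaximal μ f (x, y) ≤ ∫⁻ s in Set.Ioi (0 : ℝ),
      fiberMaximal μ ({p | ENNReal.ofReal s < f p}.indicator 1) (x, y) := by
  refine le_trans (le_of_eq ?_) (dyadicMaximal_lintegral_le
    (G := fun s x' ↦ {p | ENNReal.ofReal s < f p}.indicator 1 (x', y)) ?_ x)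
  · simp_rw [lintegral_indicator_ofReal_lt f]
    rfl
  · exact (measurable_indicator_ofReal_lt hf).comp (g := fun q : ℝ × X × Y ↦ _)
      (f := fun q : ℝ × X ↦ (q.1, q.2, y)) (by fun_prop)

variable [SecondCountableTopology X] [OpensMeasurableSpace X]

lemma mul_measure_lt_maximalFunction_le_of_bddAbove {S : Set ℝ} {K : ℝ≥0∞}
    (hS_pos : S ⊆ Set.Ioi 0) (hS_bdd : BddAbove S)
    (h_doubling : ∀ c, ∀ r ∈ S, μ (Metric.closedBall c (5 * r)) ≤ K * μ (Metric.ball c r))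
    (f : X → ℝ≥0∞) (t : ℝ≥0∞) :
    t * μ {x | t < maximalFunction μ S f x} ≤ K * ∫⁻ x, f x ∂μ := by
  obtain ⟨R, hR⟩ := hS_bdd
  set T : Set (X × ℝ) := {p | p.2 ∈ S ∧ t < ⨍⁻ w in Metric.ball p.1 p.2, f w ∂μ}
  obtain ⟨u, huT, hu_disj, hu_cover⟩ :=
    Vitali.exists_disjoint_subfamily_covering_enlargement_closedBall T Prod.fst Prod.snd R
      (fun p hp ↦ hR hp.1) 5 (by norm_num)
  have h_disj : u.PairwiseDisjoint fun p ↦ Metric.ball p.1 p.2 :=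
    hu_disj.mono fun p ↦ Metric.ball_subset_closedBall
  have hu_count : u.Countable := h_disj.countable_of_isOpen (fun p _ ↦ Metric.isOpen_ball)
    fun p hp ↦ ⟨p.1, Metric.mem_ball_self (hS_pos (huT hp).1)⟩
  have h_cover : {x | t < maximalFunction μ S f x} ⊆
      ⋃ p ∈ u, Metric.closedBall p.1 (5 * p.2) := by
    intro x hx
    obtain ⟨c, r, hr, hxc, h_avg⟩ := lt_maximalFunction_iff.1 hx
    obtain ⟨p, hpu, hp⟩ := hu_cover (c, r) ⟨hr, h_avg⟩
    exact Set.mem_biUnion hpu (hp (Metric.ball_subset_closedBall hxc))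
  calc t * μ {x | t < maximalFunction μ S f x}
    _ ≤ t * ∑' p : u, μ (Metric.closedBall p.1.1 (5 * p.1.2)) := by
        gcongr
        exact (measure_mono h_cover).trans (measure_biUnion_le _ hu_count _)
    _ ≤ t * ∑' p : u, K * μ (Metric.ball p.1.1 p.1.2) := by
        gcongr with p
        exact h_doubling _ _ (huT p.2).1
    _ = K * ∑' p : u, t * μ (Metric.ball p.1.1 p.1.2) := by
        simp_rw [ENNReal.tsum_mul_left]
        ring
    _ ≤ K * ∑' p : u, ∫⁻ w in Metric.ball p.1.1 p.1.2, f w ∂μ := by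
        gcongr with p
        exact ENNReal.mul_le_of_le_div ((huT p.2).2.le.trans_eq (setLAverage_eq ..))
    _ = K * ∫⁻ w in ⋃ p ∈ u, Metric.ball p.1 p.2, f w ∂μ := by
        rw [lintegral_biUnion hu_count (fun p _ ↦ Metric.isOpen_ball.measurableSet) h_disj]
    _ ≤ K * ∫⁻ x, f x ∂μ := by
        gcongr
        exact Measure.restrict_le_self

lemma mul_measure_lt_maximalFunction_le {S : Set ℝ} {K : ℝ≥0∞} (hS_pos : S ⊆ Set.Ioi 0)
    (h_doubling : ∀ c, ∀ r ∈ S, μ (Metric.closedBall c (5 * r)) ≤ K * μ (Metric.ball c r))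
    (f : X → ℝ≥0∞) (t : ℝ≥0∞) :
    t * μ {x | t < maximalFunction μ S f x} ≤ K * ∫⁻ x, f x ∂μ := by
  set A : ℕ → Set X := fun N ↦ {x | t < maximalFunction μ (S ∩ Set.Iic N) f x}
  have hA_mono : Monotone A := by
    intro N N' hN x hx
    obtain ⟨c, r, ⟨hrS, hrN⟩, h⟩ := lt_maximalFunction_iff.1 hx
    exact lt_maximalFunction_iff.2
      ⟨c, r, ⟨hrS, (Set.mem_Iic.1 hrN).trans (Nat.cast_le.2 hN)⟩, h⟩
  have hA_union : {x | t < maximalFunction μ S f x} ⊆ ⋃ N, A N := by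
    intro x hx
    obtain ⟨c, r, hr, h⟩ := lt_maximalFunction_iff.1 hx
    obtain ⟨N, hN⟩ := exists_nat_ge r
    exact Set.mem_iUnion.2 ⟨N, lt_maximalFunction_iff.2 ⟨c, r, ⟨hr, hN⟩, h⟩⟩
  calc t * μ {x | t < maximalFunction μ S f x}
    _ ≤ t * μ (⋃ N, A N) := by gcongr
    _ = ⨆ N, t * μ (A N) := by rw [hA_mono.measure_iUnion, ENNReal.mul_iSup]
    _ ≤ K * ∫⁻ x, f x ∂μ := iSup_le fun N ↦
        mul_measure_lt_maximalFunction_le_of_bddAbove (Set.inter_subset_left.trans hS_pos)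
          (bddAbove_Iic.mono Set.inter_subset_right) (fun c r hr ↦ h_doubling c r hr.1) f t

lemma lorentz2inf_maximalFunction_le {S : Set ℝ} {K : ℝ≥0∞} (hS_pos : S ⊆ Set.Ioi 0)
    (h_doubling : ∀ c, ∀ r ∈ S, μ (Metric.closedBall c (5 * r)) ≤ K * μ (Metric.ball c r))
    {f : X → ℝ≥0∞} (hf : Measurable f) :
    lorentz2inf μ (maximalFunction μ S f) ≤ K ^ (1 / 2 : ℝ) * eLpNorm f 2 μ := by
  refine lorentz2inf_le_iff.2 fun t _ ↦ ?_
  rw [mul_pow, rpow_half_sq, eLpNorm_two_sq]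
  refine le_trans ?_ (mul_measure_lt_maximalFunction_le hS_pos h_doubling _ (ENNReal.ofReal t ^ 2))
  refine mul_le_mul_right (measure_mono fun x hx ↦ ?_) _
  obtain ⟨c, r, hr, hxc, h_avg⟩ := lt_maximalFunction_iff.1 hx
  refine lt_maximalFunction_iff.2 ⟨c, r, hr, hxc, lt_of_lt_of_le ?_ (sq_setLAverage_le hf _)⟩
  gcongr

lemma measurable_dyadicMaximal [SFinite μ] {P : Type*} [MeasurableSpace P] {G : P → X → ℝ≥0∞}
    (hG : Measurable (Function.uncurry G)) :
    Measurable fun q : P × X ↦ dyadicMaximal μ (G q.1) q.2 := by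
  refine .iSup fun n ↦ ?_
  have h_ball : MeasurableSet {z : (P × X) × X | dist z.2 z.1.2 < 2 ^ n} :=
    measurableSet_lt (by fun_prop) measurable_const
  have h_indicator : Measurable fun z : (P × X) × X ↦
      (Metric.ball z.1.2 (2 ^ n)).indicator (G z.1.1) z.2 :=
    (show Measurable fun z : (P × X) × X ↦ G z.1.1 z.2 by fun_prop).indicator h_ball
  have h_int : Measurable fun q : P × X ↦ ∫⁻ w in Metric.ball q.2 (2 ^ n), G q.1 w ∂μ := by
    simp_rw [← lintegral_indicator Metric.isOpen_ball.measurableSet]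
    exact h_indicator.lintegral_prod_right'
  simp_rw [setLAverage_eq]
  exact h_int.div (measurable_measure_prodMk_left h_ball)

lemma mul_measure_lt_dyadicMaximal_le {K : ℝ≥0∞}
    (h_doubling : ∀ c r, 0 < r → μ (Metric.closedBall c (5 * r)) ≤ K * μ (Metric.ball c r))
    (g : X → ℝ≥0∞) (t : ℝ≥0∞) :
    t * μ {x | t < dyadicMaximal μ g x} ≤ K * ∫⁻ x, g x ∂μ := by
  refine le_trans ?_ (mul_measure_lt_maximalFunction_le subset_rfl h_doubling g t)
  gcongr with x
  exact dyadicMaximal_le_maximalFunction g x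

variable [SFinite μ]

lemma measurable_uncurry_fiberMaximal {P : Type*} [MeasurableSpace P] {G : P → X × Y → ℝ≥0∞}
    (hG : Measurable (Function.uncurry G)) :
    Measurable fun q : P × X × Y ↦ fiberMaximal μ (G q.1) q.2 := by
  have h_dyadic : Measurable fun q : (P × Y) × X ↦
      dyadicMaximal μ (fun x ↦ G q.1.1 (x, q.1.2)) q.2 :=
    measurable_dyadicMaximal (G := fun (p : P × Y) x ↦ G p.1 (x, p.2)) (by fun_prop)
  exact h_dyadic.comp (g := fun q : (P × Y) × X ↦ _)
    (f := fun q : P × X × Y ↦ ((q.1, q.2.2), q.2.1)) (by fun_prop)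

lemma measurable_fiberMaximal {f : X × Y → ℝ≥0∞} (hf : Measurable f) :
    Measurable (fiberMaximal μ f) := by
  have h_unit : Measurable fun q : Unit × X × Y ↦ fiberMaximal μ f q.2 :=
    measurable_uncurry_fiberMaximal (G := fun _ ↦ f) (hf.comp measurable_snd)
  have h_comp := h_unit.comp (measurable_prodMk_left (x := ()))
  exact h_comp

lemma mul_measure_lt_fiberMaximal_le [SFinite ν] {K : ℝ≥0∞}
    (h_doubling : ∀ c r, 0 < r → μ (Metric.closedBall c (5 * r)) ≤ K * μ (Metric.ball c r))
    {f : X × Y → ℝ≥0∞} (hf : Measurable f) (t : ℝ≥0∞) :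
    t * μ.prod ν {p | t < fiberMaximal μ f p} ≤ K * ∫⁻ p, f p ∂μ.prod ν := by
  have h_meas : MeasurableSet {p | t < fiberMaximal μ f p} :=
    measurableSet_lt measurable_const (measurable_fiberMaximal hf)
  calc t * μ.prod ν {p | t < fiberMaximal μ f p}
    _ = ∫⁻ y, t * μ {x | t < dyadicMaximal μ (fun x' ↦ f (x', y)) x} ∂ν := by
        rw [Measure.prod_apply_symm h_meas,
          ← lintegral_const_mul _ (measurable_measure_prodMk_right h_meas)]
        rfl
    _ ≤ ∫⁻ y, K * ∫⁻ x, f (x, y) ∂μ ∂ν :=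
        lintegral_mono fun y ↦ mul_measure_lt_dyadicMaximal_le h_doubling _ t
    _ = K * ∫⁻ p, f p ∂μ.prod ν := by
        rw [lintegral_const_mul _ hf.lintegral_prod_left', lintegral_prod_symm' _ hf]

lemma lorentz21_fiberMaximal_indicator_le [SFinite ν] {K : ℝ≥0∞}
    (h_doubling : ∀ c r, 0 < r → μ (Metric.closedBall c (5 * r)) ≤ K * μ (Metric.ball c r))
    {E : Set (X × Y)} (hE : MeasurableSet E) :
    lorentz21 (μ.prod ν) (fiberMaximal μ (E.indicator 1)) ≤
      4 * K ^ (1 / 2 : ℝ) * μ.prod ν E ^ (1 / 2 : ℝ) := by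
  rw [mul_assoc, ← ENNReal.mul_rpow_of_nonneg _ _ (by norm_num)]
  refine lorentz21_le_of_le_one (fun p ↦ dyadicMaximal_le_one (fun x ↦ ?_) _) fun t _ ↦ ?_
  · exact Set.indicator_le_self' (fun _ _ ↦ zero_le) _
  · simpa only [lintegral_indicator_one hE] using
      mul_measure_lt_fiberMaximal_le h_doubling (measurable_one.indicator hE) (ENNReal.ofReal t)

/-- The integral of the fibrewise maximal function of `f` against the weight `w`. -/
def weightedFiberMaximal {X Y : Type*} [PseudoMetricSpace X] [MeasurableSpace X]
    [MeasurableSpace Y] (μ : Measure X) (ν : Measure Y) (w : Y → ℝ≥0∞) (f : X × Y → ℝ≥0∞)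
    (x : X) : ℝ≥0∞ :=
  ∫⁻ y, w y * fiberMaximal μ f (x, y) ∂ν

lemma measurable_weightedFiberMaximal [SFinite ν] {w : Y → ℝ≥0∞} (hw : Measurable w)
    {f : X × Y → ℝ≥0∞} (hf : Measurable f) : Measurable (weightedFiberMaximal μ ν w f) :=
  ((hw.comp measurable_snd).mul (measurable_fiberMaximal hf)).lintegral_prod_right'

lemma eLpNorm_two_weightedFiberMaximal_indicator_le [SFinite ν] {K : ℝ≥0∞}
    (h_doubling : ∀ c r, 0 < r → μ (Metric.closedBall c (5 * r)) ≤ K * μ (Metric.ball c r))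
    {w : Y → ℝ≥0∞} (hw : Measurable w) {E : Set (X × Y)} (hE : MeasurableSet E) :
    eLpNorm (weightedFiberMaximal μ ν w (E.indicator 1)) 2 μ ≤
      lorentz2inf ν w * (4 * K ^ (1 / 2 : ℝ) * μ.prod ν E ^ (1 / 2 : ℝ)) := by
  have h_meas : Measurable (fiberMaximal μ (E.indicator (1 : X × Y → ℝ≥0∞))) :=
    measurable_fiberMaximal (measurable_one.indicator hE)
  calc eLpNorm (weightedFiberMaximal μ ν w (E.indicator 1)) 2 μ
    _ ≤ eLpNorm (fun x ↦ lorentz2inf ν w *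
          lorentz21 ν fun y ↦ fiberMaximal μ (E.indicator 1) (x, y)) 2 μ :=
        eLpNorm_mono_enorm fun x ↦ lintegral_mul_le_lorentz2inf_mul_lorentz21 hw
          (h_meas.comp measurable_prodMk_left)
    _ = lorentz2inf ν w * eLpNorm
          (fun x ↦ lorentz21 ν fun y ↦ fiberMaximal μ (E.indicator 1) (x, y)) 2 μ :=
        eLpNorm_two_const_mul _ (measurable_lorentz21 h_meas)
    _ ≤ lorentz2inf ν w * (4 * K ^ (1 / 2 : ℝ) * μ.prod ν E ^ (1 / 2 : ℝ)) := by
        grw [eLpNorm_two_lorentz21_le h_meas, lorentz21_fiberMaximal_indicator_le h_doubling hE]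

lemma measurable_fiberMaximal_level {f : X × Y → ℝ≥0∞} (hf : Measurable f) :
    Measurable fun q : ℝ × X × Y ↦
      fiberMaximal μ ({p | ENNReal.ofReal q.1 < f p}.indicator 1) q.2 :=
  measurable_uncurry_fiberMaximal (G := fun s ↦ {p | ENNReal.ofReal s < f p}.indicator 1)
    (measurable_indicator_ofReal_lt hf)

lemma weightedFiberMaximal_le_lintegral [SFinite ν] {w : Y → ℝ≥0∞} (hw : Measurable w)
    {f : X × Y → ℝ≥0∞} (hf : Measurable f) (x : X) :
    weightedFiberMaximal μ ν w f x ≤ ∫⁻ s in Set.Ioi (0 : ℝ),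
      weightedFiberMaximal μ ν w ({p | ENNReal.ofReal s < f p}.indicator 1) x := by
  have h_level := measurable_fiberMaximal_level (μ := μ) hf
  calc weightedFiberMaximal μ ν w f x
    _ ≤ ∫⁻ y, w y * (∫⁻ s in Set.Ioi (0 : ℝ),
          fiberMaximal μ ({p | ENNReal.ofReal s < f p}.indicator 1) (x, y)) ∂ν :=
        lintegral_mono fun y ↦ mul_le_mul_right (fiberMaximal_le_lintegral hf x y) _
    _ = ∫⁻ y, (∫⁻ s in Set.Ioi (0 : ℝ),
          w y * fiberMaximal μ ({p | ENNReal.ofReal s < f p}.indicator 1) (x, y)) ∂ν :=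
        lintegral_congr fun y ↦ (lintegral_const_mul _ (h_level.comp
          (f := fun s : ℝ ↦ (s, x, y)) (by fun_prop))).symm
    _ = ∫⁻ s in Set.Ioi (0 : ℝ),
          weightedFiberMaximal μ ν w ({p | ENNReal.ofReal s < f p}.indicator 1) x :=
        lintegral_lintegral_swap ((hw.comp measurable_fst).mul (h_level.comp
          (f := fun q : Y × ℝ ↦ (q.2, x, q.1)) (by fun_prop))).aemeasurable

theorem eLpNorm_two_weightedFiberMaximal_le [SFinite ν] {K : ℝ≥0∞}
    (h_doubling : ∀ c r, 0 < r → μ (Metric.closedBall c (5 * r)) ≤ K * μ (Metric.ball c r))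
    {w : Y → ℝ≥0∞} (hw : Measurable w) {f : X × Y → ℝ≥0∞} (hf : Measurable f) :
    eLpNorm (weightedFiberMaximal μ ν w f) 2 μ ≤
      2 * K ^ (1 / 2 : ℝ) * lorentz2inf ν w * lorentz21 (μ.prod ν) f := by
  have h_joint : Measurable (Function.uncurry fun s ↦
      weightedFiberMaximal μ ν w ({p | ENNReal.ofReal s < f p}.indicator 1)) :=
    Measurable.lintegral_prod_right' (f := fun q : (ℝ × X) × Y ↦ w q.2 *
      fiberMaximal μ ({p | ENNReal.ofReal q.1.1 < f p}.indicator 1) (q.1.2, q.2))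
      ((hw.comp measurable_snd).mul ((measurable_fiberMaximal_level hf).comp
        (f := fun q : (ℝ × X) × Y ↦ (q.1.1, q.1.2, q.2)) (by fun_prop)))
  calc eLpNorm (weightedFiberMaximal μ ν w f) 2 μ
    _ ≤ eLpNorm (fun x ↦ ∫⁻ s in Set.Ioi (0 : ℝ),
          weightedFiberMaximal μ ν w ({p | ENNReal.ofReal s < f p}.indicator 1) x) 2 μ :=
        eLpNorm_mono_enorm (weightedFiberMaximal_le_lintegral hw hf)
    _ ≤ ∫⁻ s in Set.Ioi (0 : ℝ),
          eLpNorm (weightedFiberMaximal μ ν w ({p | ENNReal.ofReal s < f p}.indicator 1)) 2 μ :=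
        eLpNorm_two_lintegral_le h_joint
    _ ≤ ∫⁻ s in Set.Ioi (0 : ℝ), lorentz2inf ν w *
          (4 * K ^ (1 / 2 : ℝ) * μ.prod ν {p | ENNReal.ofReal s < f p} ^ (1 / 2 : ℝ)) :=
        lintegral_mono fun s ↦ eLpNorm_two_weightedFiberMaximal_indicator_le h_doubling hw
          (measurableSet_ofReal_lt hf s)
    _ = 2 * K ^ (1 / 2 : ℝ) * lorentz2inf ν w * lorentz21 (μ.prod ν) f := by
        simp_rw [← mul_assoc]
        rw [lintegral_const_mul _ ((antitone_measure_ofReal_lt f).measurable.pow_const _),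
          lorentz21]
        ring

end Maximal

section UpperHalfPlane

lemma setLIntegral_closedBall_le_dyadicMaximal (g : ℝ → ℝ≥0∞) (x : ℝ) {s : ℝ} (hs : 0 ≤ s) :
    ∫⁻ w in Metric.closedBall x s, g w ≤ ENNReal.ofReal (4 * s) * dyadicMaximal volume g x := by
  rcases hs.eq_or_lt with rfl | hs_pos
  · simp
  obtain ⟨n, hn_le, hn_lt⟩ := exists_mem_Ico_zpow hs_pos one_lt_two
  calc ∫⁻ w in Metric.closedBall x s, g w
    _ ≤ ∫⁻ w in Metric.ball x (2 ^ (n + 1)), g w :=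
        lintegral_mono_set (Metric.closedBall_subset_ball hn_lt)
    _ = volume (Metric.ball x (2 ^ (n + 1))) * ⨍⁻ w in Metric.ball x (2 ^ (n + 1)), g w ∂volume :=
        (measure_mul_setLAverage g measure_ball_lt_top.ne).symm
    _ ≤ ENNReal.ofReal (4 * s) * dyadicMaximal volume g x := by
        rw [Real.volume_ball]
        gcongr ENNReal.ofReal ?_ * ?_
        · rw [zpow_add_one₀ two_ne_zero]
          linarith
        · exact le_iSup (fun n : ℤ ↦ ⨍⁻ w in Metric.ball x (2 ^ n), g w ∂volume) (n + 1)

lemma volume_closedBall_five_mul_le (c r : ℝ) :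
    volume (Metric.closedBall c (5 * r)) ≤ 5 * volume (Metric.ball c r) := by
  rw [Real.volume_closedBall, Real.volume_ball, mul_left_comm,
    ENNReal.ofReal_mul (by norm_num : (0 : ℝ) ≤ 5), ENNReal.ofReal_ofNat]

/-- The measure `dy / y²` on the positive half-line: the vertical factor of `hypMeasure`. -/
def invSqMeasure : Measure ℝ :=
  (volume.restrict (Set.Ioi 0)).withDensity fun y ↦ ENNReal.ofReal (1 / y ^ 2)

instance : SFinite invSqMeasure := by
  unfold invSqMeasure
  infer_instance

lemma invSqMeasure_Ioi {a : ℝ} (ha : 0 < a) :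
    invSqMeasure (Set.Ioi a) = ENNReal.ofReal (1 / a) := by
  rw [invSqMeasure, withDensity_apply _ measurableSet_Ioi,
    Measure.restrict_restrict measurableSet_Ioi, Set.inter_eq_left.2 (Set.Ioi_subset_Ioi ha.le),
    lintegral_Ioi_one_div_sq ha]

lemma invSqMeasure_Icc {a b : ℝ} (ha : 0 < a) (hab : a ≤ b) :
    invSqMeasure (Set.Icc a b) = ENNReal.ofReal (1 / a - 1 / b) := by
  have hb : 0 < b := ha.trans_le hab
  have h_ae : Set.Ioc a b =ᵐ[invSqMeasure] Set.Icc a b :=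
    (withDensity_absolutelyContinuous _ _).ae_le Ioc_ae_eq_Icc
  rw [← measure_congr h_ae, ← Set.Ioi_sdiff_Ioi, measure_sdiff (Set.Ioi_subset_Ioi hab)
    measurableSet_Ioi.nullMeasurableSet (by simp [invSqMeasure_Ioi hb]), invSqMeasure_Ioi ha,
    invSqMeasure_Ioi hb, ENNReal.ofReal_sub _ (by positivity)]

lemma lorentz2inf_invSqMeasure_sqrt_le :
    lorentz2inf invSqMeasure (fun y ↦ ENNReal.ofReal √y) ≤ 1 := by
  refine lorentz2inf_le_iff.2 fun t ht ↦ ?_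
  have h_level : {y | ENNReal.ofReal t < ENNReal.ofReal √y} = Set.Ioi (t ^ 2) := by
    ext y
    exact (ENNReal.ofReal_lt_ofReal_iff_of_nonneg ht.le).trans (Real.lt_sqrt ht.le)
  rw [h_level, invSqMeasure_Ioi (by positivity), ← ENNReal.ofReal_pow ht.le,
    ← ENNReal.ofReal_mul (by positivity), mul_one_div_cancel (by positivity)]
  simp

/-- The Cartesian coordinates `(re z, im z)` on the upper half-plane. -/
def coords (z : ℍ) : ℝ × ℝ := (z.re, z.im)

lemma measurableEmbedding_coords : MeasurableEmbedding coords :=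
  Complex.measurableEquivRealProd.measurableEmbedding.comp
    UpperHalfPlane.isOpenEmbedding_coe.measurableEmbedding

lemma measurePreserving_coords :
    MeasurePreserving coords hypMeasure (volume.prod invSqMeasure) := by
  have h_coe : MeasurableEmbedding ((↑) : ℍ → ℂ) :=
    UpperHalfPlane.isOpenEmbedding_coe.measurableEmbedding
  have h_coords := measurableEmbedding_coords.measurable
  have h_density : Measurable fun p : ℝ × ℝ ↦ ENNReal.ofReal (1 / p.2 ^ 2) := by fun_prop
  refine ⟨h_coords, Measure.ext_of_lintegral _ fun g hg ↦ ?_⟩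
  set G : ℝ × ℝ → ℝ≥0∞ := fun p ↦ ENNReal.ofReal (1 / p.2 ^ 2) * g p
  have hG : Measurable G := h_density.mul hg
  calc ∫⁻ p, g p ∂hypMeasure.map coords
    _ = ∫⁻ z : ℍ, G (coords z) ∂Measure.comap (↑) (volume : Measure ℂ) := by
        rw [lintegral_map hg h_coords, hypMeasure]
        exact lintegral_withDensity_eq_lintegral_mul _ (h_density.comp h_coords)
          (hg.comp h_coords)
    _ = ∫⁻ w in upperHalfPlaneSet, G (Complex.measurableEquivRealProd w) := by
        rw [← UpperHalfPlane.range_coe, ← h_coe.map_comap, h_coe.lintegral_map]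
        rfl
    _ = ∫⁻ p in Set.univ ×ˢ Set.Ioi 0, G p := by
        rw [← Complex.volume_preserving_equiv_real_prod.setLIntegral_comp_preimage
          (MeasurableSet.univ.prod measurableSet_Ioi) hG]
        congr 2
        ext w
        simp [upperHalfPlaneSet]
    _ = ∫⁻ p, g p ∂volume.prod invSqMeasure := by
        rw [Measure.volume_eq_prod, ← Measure.prod_restrict, Measure.restrict_univ, invSqMeasure,
          prod_withDensity_right (by fun_prop),
          lintegral_withDensity_eq_lintegral_mul _ h_density hg]
        rfl

lemma hypMeasure_rectangle (x₁ x₂ : ℝ) {a b : ℝ} (ha : 0 < a) (hab : a ≤ b) :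
    hypMeasure (coords ⁻¹' Set.Icc x₁ x₂ ×ˢ Set.Icc a b) =
      ENNReal.ofReal (x₂ - x₁) * ENNReal.ofReal (1 / a - 1 / b) := by
  rw [measurePreserving_coords.measure_preimage
    (measurableSet_Icc.prod measurableSet_Icc).nullMeasurableSet, Measure.prod_prod,
    Real.volume_Icc, invSqMeasure_Icc ha hab]

lemma closedBall_subset_rectangle (c : ℍ) (r : ℝ) :
    Metric.closedBall c r ⊆ coords ⁻¹' (Set.Icc (c.re - c.im * Real.sinh r)
      (c.re + c.im * Real.sinh r) ×ˢ Set.Icc (c.im * Real.exp (-r)) (c.im * Real.exp r)) := by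
  intro z hz
  have h_dist := UpperHalfPlane.dist_le_iff_dist_coe_center_le.1 (Metric.mem_closedBall.1 hz)
  rw [Complex.dist_eq] at h_dist
  have h_re := abs_le.1 ((Complex.abs_re_le_norm _).trans h_dist)
  have h_im := abs_le.1 ((Complex.abs_im_le_norm _).trans h_dist)
  simp only [Complex.sub_re, Complex.sub_im, UpperHalfPlane.coe_re, UpperHalfPlane.coe_im,
    UpperHalfPlane.center_re, UpperHalfPlane.center_im] at h_re h_im
  rw [← Real.cosh_sub_sinh, ← Real.cosh_add_sinh]
  refine ⟨⟨?_, ?_⟩, ?_, ?_⟩ <;> simp only [coords] <;> linarith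

lemma hypMeasure_closedBall_le (c : ℍ) {r : ℝ} (hr : 0 ≤ r) :
    hypMeasure (Metric.closedBall c r) ≤ ENNReal.ofReal (4 * Real.sinh r ^ 2) := by
  have hc := c.im_pos
  have h_sinh := Real.sinh_nonneg_iff.2 hr
  refine (measure_mono (closedBall_subset_rectangle c r)).trans_eq ?_
  rw [hypMeasure_rectangle _ _ (by positivity) (by gcongr; linarith),
    ← ENNReal.ofReal_mul (by nlinarith)]
  congr 1
  rw [Real.sinh_eq, Real.exp_neg]
  field_simp
  ring

lemma mem_ball_iff_sq_lt {z c : ℍ} {r : ℝ} (hr : 0 ≤ r) :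
    z ∈ Metric.ball c r ↔ (z.re - c.re) ^ 2 <
      (z.im - c.im * Real.exp (-r)) * (c.im * Real.exp r - z.im) := by
  have h_exp : Real.exp (-r) * Real.exp r = 1 := by rw [← Real.exp_add]; simp
  have h_expand : (z.im - c.im * Real.exp (-r)) * (c.im * Real.exp r - z.im) =
      Real.cosh r * (2 * z.im * c.im) - z.im ^ 2 - c.im ^ 2 := by
    rw [Real.cosh_eq]
    linear_combination (-c.im ^ 2) * h_exp
  rw [Metric.mem_ball, ← abs_of_nonneg hr, ← abs_of_nonneg (dist_nonneg (x := z)),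
    ← Real.cosh_lt_cosh, UpperHalfPlane.cosh_dist', div_lt_iff₀ (by positivity),
    abs_of_nonneg hr, h_expand]
  constructor <;> intro h <;> linarith

lemma rectangle_subset_ball (c : ℍ) {r u : ℝ} (hr : 0 < r) (hu : u = Real.exp (-r)) :
    coords ⁻¹' (Set.Icc (c.re - c.im * ((1 - u) / 2)) (c.re + c.im * ((1 - u) / 2)) ×ˢ
      Set.Icc (c.im * (u * (3 - u) / 2)) (c.im * (u * (2 - u)))) ⊆ Metric.ball c r := by
  have hc := c.im_pos
  have hu_pos : 0 < u := hu ▸ Real.exp_pos _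
  have hu_lt : u < 1 := by rw [hu, Real.exp_lt_one_iff]; linarith
  have h_exp : u * Real.exp r = 1 := by rw [hu, ← Real.exp_add]; simp
  rintro z ⟨⟨h_left, h_right⟩, h_bot, h_top⟩
  simp only [coords] at h_left h_right h_bot h_top
  rw [mem_ball_iff_sq_lt hr.le, ← hu]
  have : 0 < 1 - u := sub_pos.2 hu_lt
  have h_above : c.im * (u * (1 - u) / 2) ≤ z.im - c.im * u := by linarith
  have h_below : c.im * (Real.exp r - u * (2 - u)) ≤ c.im * Real.exp r - z.im := by linarith
  calc (z.re - c.re) ^ 2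
    _ ≤ (c.im * ((1 - u) / 2)) ^ 2 := sq_le_sq' (by linarith) (by linarith)
    _ < c.im * (u * (1 - u) / 2) * (c.im * (Real.exp r - u * (2 - u))) := by
        have h_gap : 0 < c.im ^ 2 * (1 - u) ^ 2 * (1 / 2 + u * (1 - u)) := by positivity
        linear_combination h_gap / 2 - c.im ^ 2 * (1 - u) / 2 * h_exp
    _ ≤ (z.im - c.im * u) * (c.im * Real.exp r - z.im) := by
        gcongr
        · nlinarith [Real.add_one_le_exp r]
        · exact (by positivity : 0 ≤ c.im * (u * (1 - u) / 2)).trans h_above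

lemma le_hypMeasure_ball (c : ℍ) {r : ℝ} (hr : 0 < r) :
    ENNReal.ofReal (2 / 3 * Real.sinh (r / 2) ^ 2) ≤ hypMeasure (Metric.ball c r) := by
  set u := Real.exp (-r) with hu
  have hc := c.im_pos
  have hu_pos : 0 < u := Real.exp_pos _
  have hu_lt : u < 1 := Real.exp_lt_one_iff.2 (by linarith)
  have h_three : 0 < 3 - u := by linarith
  have h_two : 0 < 2 - u := by linarith
  have h_sinh : Real.sinh (r / 2) ^ 2 = (1 - u) ^ 2 / (4 * u) := by
    have h_double := Real.cosh_sq' (r / 2)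
    have h_cosh := Real.cosh_two_mul (r / 2)
    rw [mul_div_cancel₀ r two_ne_zero, Real.cosh_eq, ← hu, ← inv_inv (Real.exp r),
      ← Real.exp_neg, ← hu] at h_cosh
    field_simp at h_cosh ⊢
    nlinarith
  refine le_trans ?_ (measure_mono (rectangle_subset_ball c hr hu))
  rw [hypMeasure_rectangle _ _ (by positivity) (by gcongr; nlinarith),
    ← ENNReal.ofReal_mul (by nlinarith), h_sinh]
  apply ENNReal.ofReal_le_ofReal
  calc 2 / 3 * ((1 - u) ^ 2 / (4 * u))
    _ = (1 - u) ^ 2 / (u * 6) := by ring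
    _ ≤ (1 - u) ^ 2 / (u * ((3 - u) * (2 - u))) := by
        gcongr
        nlinarith
    _ = (c.re + c.im * ((1 - u) / 2) - (c.re - c.im * ((1 - u) / 2))) *
          (1 / (c.im * (u * (3 - u) / 2)) - 1 / (c.im * (u * (2 - u)))) := by
        field_simp
        ring

lemma sinh_le_mul_exp (x : ℝ) : Real.sinh x ≤ x * Real.exp x := by
  have h_tangent : (-2 * x + 1) * Real.exp x ≤ Real.exp (-2 * x) * Real.exp x := by
    gcongr
    exact Real.add_one_le_exp _
  rw [← Real.exp_add, show -2 * x + x = -x by ring] at h_tangent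
  rw [Real.sinh_eq]
  linarith

lemma hypMeasure_closedBall_five_mul_le (c : ℍ) {r : ℝ} (hr_pos : 0 < r) (hr_le : r ≤ 1) :
    hypMeasure (Metric.closedBall c (5 * r)) ≤
      ENNReal.ofReal (600 * Real.exp 10) * hypMeasure (Metric.ball c r) := by
  have h_sinh_le : Real.sinh (5 * r) ≤ 5 * r * Real.exp 5 :=
    (sinh_le_mul_exp _).trans (by gcongr; linarith)
  have h_le_sinh : r / 2 ≤ Real.sinh (r / 2) := Real.self_le_sinh_iff.2 (by positivity)
  have h_exp : Real.exp 5 ^ 2 = Real.exp 10 := by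
    rw [← Real.exp_nat_mul]
    norm_num
  calc hypMeasure (Metric.closedBall c (5 * r))
    _ ≤ ENNReal.ofReal (4 * Real.sinh (5 * r) ^ 2) := hypMeasure_closedBall_le c (by positivity)
    _ ≤ ENNReal.ofReal (600 * Real.exp 10 * (2 / 3 * Real.sinh (r / 2) ^ 2)) := by
        apply ENNReal.ofReal_le_ofReal
        calc 4 * Real.sinh (5 * r) ^ 2
          _ ≤ 4 * (5 * r * Real.exp 5) ^ 2 := by
              gcongr
          _ = 600 * Real.exp 10 * (2 / 3 * (r / 2) ^ 2) := by
              linear_combination 100 * r ^ 2 * h_exp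
          _ ≤ 600 * Real.exp 10 * (2 / 3 * Real.sinh (r / 2) ^ 2) := by gcongr
    _ ≤ ENNReal.ofReal (600 * Real.exp 10) * hypMeasure (Metric.ball c r) := by
        rw [ENNReal.ofReal_mul (by positivity)]
        gcongr
        exact le_hypMeasure_ball c hr_pos

lemma le_hypMeasure_ball_of_one_le (c : ℍ) {r : ℝ} (hr : 1 ≤ r) :
    ENNReal.ofReal (Real.exp r / 24) ≤ hypMeasure (Metric.ball c r) := by
  refine le_trans (ENNReal.ofReal_le_ofReal ?_) (le_hypMeasure_ball c (by linarith))
  have h_sq : Real.exp (r / 2) ^ 2 = Real.exp r := by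
    rw [← Real.exp_nat_mul]
    ring_nf
  have h_inv : Real.exp (-(r / 2)) * Real.exp (r / 2) = 1 := by
    rw [← Real.exp_add]
    simp
  have h_two : 2 ≤ Real.exp r := by linarith [Real.add_one_le_exp r]
  have h_sinh : Real.exp (r / 2) / 4 ≤ Real.sinh (r / 2) := by
    rw [Real.sinh_eq]
    nlinarith [Real.exp_pos (r / 2)]
  calc Real.exp r / 24
    _ = 2 / 3 * (Real.exp (r / 2) / 4) ^ 2 := by linear_combination -h_sq / 24
    _ ≤ 2 / 3 * Real.sinh (r / 2) ^ 2 := by gcongr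

lemma abs_re_sub_le_of_dist_le {z w : ℍ} {r : ℝ} (h : dist z w ≤ 2 * r) :
    |w.re - z.re| ≤ Real.exp r * √z.im * √w.im := by
  have h_dist : dist (z : ℂ) w = Real.sinh (dist z w / 2) * (2 * √(z.im * w.im)) := by
    rw [UpperHalfPlane.sinh_half_dist]
    field_simp
  have h_sinh : Real.sinh (dist z w / 2) ≤ Real.exp r / 2 := by
    have h_exp : Real.exp (dist z w / 2) ≤ Real.exp r := Real.exp_le_exp.2 (by linarith)
    have h_exp_neg := Real.exp_pos (-(dist z w / 2))
    rw [Real.sinh_eq]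
    linarith
  calc |w.re - z.re|
    _ ≤ dist (z : ℂ) w := by
        rw [dist_comm, Complex.dist_eq]
        exact Complex.abs_re_le_norm ((w : ℂ) - z)
    _ ≤ Real.exp r / 2 * (2 * √(z.im * w.im)) := by grw [h_dist, h_sinh]
    _ = Real.exp r * √z.im * √w.im := by rw [Real.sqrt_mul z.im_pos.le]; ring

lemma setLIntegral_hypMeasure_ball_le {g : ℝ × ℝ → ℝ≥0∞} (hg : Measurable g) {z c : ℍ} {r : ℝ}
    (hz : z ∈ Metric.ball c r) :
    ∫⁻ w in Metric.ball c r, g (coords w) ∂hypMeasure ≤ ENNReal.ofReal (4 * Real.exp r * √z.im) *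
      weightedFiberMaximal volume invSqMeasure (fun y ↦ ENNReal.ofReal √y) g z.re := by
  set S : Set (ℝ × ℝ) := {p | |p.1 - z.re| ≤ Real.exp r * √z.im * √p.2}
  have hS_meas : MeasurableSet S := measurableSet_le (by fun_prop) (by fun_prop)
  have h_sub : Metric.ball c r ⊆ coords ⁻¹' S := fun w hw ↦ abs_re_sub_le_of_dist_le <| by
    linarith [dist_triangle_right z w c, Metric.mem_ball.1 hz, Metric.mem_ball.1 hw]
  have h_slice (y : ℝ) : ∫⁻ x, S.indicator g (x, y) = ∫⁻ x in Metric.closedBall z.re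
      (Real.exp r * √z.im * √y), g (x, y) := by
    rw [← lintegral_indicator Metric.isClosed_closedBall.measurableSet]
    rfl
  calc ∫⁻ w in Metric.ball c r, g (coords w) ∂hypMeasure
    _ ≤ ∫⁻ w in coords ⁻¹' S, g (coords w) ∂hypMeasure := lintegral_mono_set h_sub
    _ = ∫⁻ p, S.indicator g p ∂volume.prod invSqMeasure := by
        rw [measurePreserving_coords.setLIntegral_comp_preimage hS_meas hg,
          lintegral_indicator hS_meas]
    _ = ∫⁻ y, (∫⁻ x in Metric.closedBall z.re (Real.exp r * √z.im * √y), g (x, y))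
          ∂invSqMeasure := by
        simp_rw [lintegral_prod_symm _ (hg.indicator hS_meas).aemeasurable, h_slice]
    _ ≤ ∫⁻ y, ENNReal.ofReal (4 * (Real.exp r * √z.im * √y)) *
          fiberMaximal volume g (z.re, y) ∂invSqMeasure :=
        lintegral_mono fun y ↦ setLIntegral_closedBall_le_dyadicMaximal _ _ (by positivity)
    _ = ENNReal.ofReal (4 * Real.exp r * √z.im) *
          weightedFiberMaximal volume invSqMeasure (fun y ↦ ENNReal.ofReal √y) g z.re := by
        rw [weightedFiberMaximal, ← lintegral_const_mul' _ _ ENNReal.ofReal_ne_top]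
        congr with y
        rw [← mul_assoc (ENNReal.ofReal _) (ENNReal.ofReal _), ← ENNReal.ofReal_mul (by positivity)]
        ring_nf

lemma setLAverage_hypMeasure_ball_le {g : ℝ × ℝ → ℝ≥0∞} (hg : Measurable g) {z c : ℍ} {r : ℝ}
    (hr : 1 ≤ r) (hz : z ∈ Metric.ball c r) :
    ⨍⁻ w in Metric.ball c r, g (coords w) ∂hypMeasure ≤ 96 *
      (weightedFiberMaximal volume invSqMeasure (fun y ↦ ENNReal.ofReal √y) g z.re *
        ENNReal.ofReal √z.im) := by
  have h_const : ENNReal.ofReal (4 * Real.exp r * √z.im) =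
      ENNReal.ofReal (Real.exp r / 24) * (96 * ENNReal.ofReal √z.im) := by
    rw [← ENNReal.ofReal_ofNat 96, ← ENNReal.ofReal_mul (by norm_num),
      ← ENNReal.ofReal_mul (by positivity)]
    ring_nf
  rw [setLAverage_eq]
  grw [setLIntegral_hypMeasure_ball_le hg hz, h_const, le_hypMeasure_ball_of_one_le c hr]
  refine ENNReal.div_le_of_le_mul' (le_of_eq ?_)
  ring

lemma maximalFunction_hypMeasure_Ioi_one_le {g : ℝ × ℝ → ℝ≥0∞} (hg : Measurable g) (z : ℍ) :
    maximalFunction hypMeasure (Set.Ioi 1) (g ∘ coords) z ≤ 96 *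
      (weightedFiberMaximal volume invSqMeasure (fun y ↦ ENNReal.ofReal √y) g z.re *
        ENNReal.ofReal √z.im) :=
  iSup₂_le fun _ _ ↦ iSup₂_le fun hr hz ↦ setLAverage_hypMeasure_ball_le hg hr.le hz

lemma lorentz2inf_maximalFunction_Ioi_one_le {f : ℍ → ℝ≥0∞} (hf : Measurable f) :
    lorentz2inf hypMeasure (maximalFunction hypMeasure (Set.Ioi 1) f) ≤
      192 * 5 ^ (1 / 2 : ℝ) * lorentz21 hypMeasure f := by
  set w : ℝ → ℝ≥0∞ := fun y ↦ ENNReal.ofReal √y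
  have hw : Measurable w := by fun_prop
  set g : ℝ × ℝ → ℝ≥0∞ := Function.extend coords f 0
  have hg : Measurable g := measurableEmbedding_coords.measurable_extend hf measurable_zero
  have h_comp : g ∘ coords = f := Function.extend_comp measurableEmbedding_coords.injective f 0
  set F := weightedFiberMaximal volume invSqMeasure w g
  have hF : Measurable F := measurable_weightedFiberMaximal hw hg
  have hFw : Measurable fun p : ℝ × ℝ ↦ F p.1 * w p.2 :=
    (hF.comp measurable_fst).mul (hw.comp measurable_snd)
  calc lorentz2inf hypMeasure (maximalFunction hypMeasure (Set.Ioi 1) f)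
    _ ≤ lorentz2inf hypMeasure (fun z ↦ 96 * (F z.re * w z.im)) := by
        rw [← h_comp]
        exact lorentz2inf_mono (maximalFunction_hypMeasure_Ioi_one_le hg)
    _ ≤ 96 * lorentz2inf hypMeasure ((fun p ↦ F p.1 * w p.2) ∘ coords) :=
        lorentz2inf_const_mul_le _ _
    _ = 96 * lorentz2inf (volume.prod invSqMeasure) (fun p ↦ F p.1 * w p.2) := by
        rw [lorentz2inf_comp_measurePreserving measurePreserving_coords hFw]
    _ ≤ 96 * (eLpNorm F 2 volume * lorentz2inf invSqMeasure w) := by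
        grw [lorentz2inf_mul_prod_le hF hw]
    _ ≤ 96 * (2 * 5 ^ (1 / 2 : ℝ) * 1 * lorentz21 (volume.prod invSqMeasure) g * 1) := by
        grw [eLpNorm_two_weightedFiberMaximal_le (fun c r _ ↦ volume_closedBall_five_mul_le c r)
          hw hg, lorentz2inf_invSqMeasure_sqrt_le]
    _ = 192 * 5 ^ (1 / 2 : ℝ) * lorentz21 hypMeasure f := by
        rw [← lorentz21_comp_measurePreserving measurePreserving_coords hg, h_comp]
        ring

instance : IsLocallyFiniteMeasure hypMeasure :=
  ⟨fun c ↦ ⟨Metric.closedBall c 1, Metric.closedBall_mem_nhds c one_pos,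
    (hypMeasure_closedBall_le c zero_le_one).trans_lt ENNReal.ofReal_lt_top⟩⟩

lemma lorentz2inf_maximalFunction_Ioc_le {f : ℍ → ℝ≥0∞} (hf : Measurable f) :
    lorentz2inf hypMeasure (maximalFunction hypMeasure (Set.Ioc 0 1) f) ≤
      ENNReal.ofReal (600 * Real.exp 10) ^ (1 / 2 : ℝ) * lorentz21 hypMeasure f := by
  grw [lorentz2inf_maximalFunction_le Set.Ioc_subset_Ioi_self
    (fun c r hr ↦ hypMeasure_closedBall_five_mul_le c hr.1 hr.2) hf]
  gcongr
  exact (le_mul_of_one_le_left' one_le_two).trans (two_mul_eLpNorm_two_le_lorentz21 hf)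

lemma M2_eq_maximalFunction_sup (f : ℍ → ℝ≥0∞) :
    M2 f = maximalFunction hypMeasure (Set.Ioc 0 1) f ⊔
      maximalFunction hypMeasure (Set.Ioi 1) f := by
  have h_radii (r : ℝ) : 0 < r ↔ r ∈ Set.Ioc 0 1 ∪ Set.Ioi (1 : ℝ) := by
    rw [Set.Ioc_union_Ioi_eq_Ioi zero_le_one, Set.mem_Ioi]
  ext z
  simp only [M2, maximalFunction, setLAverage_eq, div_eq_mul_inv, mul_comm, h_radii,
    Set.mem_union, iSup_or, iSup_sup_eq, Pi.sup_apply]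

end UpperHalfPlane

/-- The noncentered maximal operator `M₂` is bounded from `L^{2,1}(ℍ)` to `L^{2,∞}(ℍ)`
on the hyperbolic plane. -/
theorem M2_L21_L2inf :
    ∃ C : ℝ≥0, ∀ f : UpperHalfPlane → ℝ≥0∞, Measurable f →
      lorentz2inf hypMeasure (M2 f) ≤ C * lorentz21 hypMeasure f := by
  set C_local : ℝ≥0∞ := ENNReal.ofReal (600 * Real.exp 10) ^ (1 / 2 : ℝ)
  set C_large : ℝ≥0∞ := 192 * 5 ^ (1 / 2 : ℝ)
  have h_finite : C_local + C_large ≠ ∞ := by finiteness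
  refine ⟨(C_local + C_large).toNNReal, fun f hf ↦ ?_⟩
  rw [M2_eq_maximalFunction_sup, ENNReal.coe_toNNReal h_finite, add_mul]
  exact (lorentz2inf_sup_le _ _).trans
    (add_le_add (lorentz2inf_maximalFunction_Ioc_le hf) (lorentz2inf_maximalFunction_Ioi_one_le hf))

end
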